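/- Let G be an edge-colored graph with d^c(v) ≥ k for every vertex v of G, and let t be the maximum length of a rainbow path in G. If t < ⌈3k/5⌉, then G contains a rainbow cycle of length t+1. -/

import Mathlib

/-!
Let `f 0, …, f t` be a maximum rainbow path with `5 t < 3 k`, and suppose that there is no rainbow
cycle of length `t + 1`.

By maximality, every edge at `f 0` with a color not on the path ends on the path, so `f 0` sends
edges of at least `k - t > 2t/3` distinct new colors to the path (`exists_end_fan`), and so does
`f t`. If `f 0 – f i` and `f t – f (i - 1)` both have new colors, these colors agree, since
otherwise `f 0, …, f (i - 1), f t, …, f i` is a rainbow cycle of length `t + 1`. Counting gives more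
than `t/3 + 2` such indices `i`, so two of them, `i < j`, satisfy `j - i ≤ 2`. The chords
`f t – f (i - 1)` and `f 0 – f j` then have distinct colors and produce a rainbow cycle `Z` through
all of the path but `f i, …, f (j - 1)` (`RPath.cross`).

* If `j = i + 1`, then `Z` has length `t` and misses only `x = f i`. All new colors at `x` occur on
  edges to `Z`, and there are more than `t/2` of them, so `x` fits between two consecutive vertices
  of `Z` (`no_gap_one`).
* If `j = i + 2`, then `Z` has length `t - 1` and misses the edge `x y = f i f (i + 1)`. Both `x`
  and `y` send more than `2/3 (t - 1)` edges of distinct new colors to `Z`. Hence some neighbor of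
  `x` on `Z` has both its predecessor and its successor on `Z` adjacent to `y`, by edges of
  different colors, and one of them allows the edge `x y` to be inserted into `Z`
  (`no_gap_two`).

Paths are handled as sequences `ℕ → V` and cycles as maps `ZMod n → V`, which makes rotations and
counting on a cycle immediate.
-/

open SimpleGraph

/-- The color degree of a vertex `v`: the number of distinct colors appearing on
edges incident to `v`. -/
noncomputable def colorDegree {V : Type*} (G : SimpleGraph V) (c : Sym2 V → ℕ) (v : V) : ℕ :=
  (c '' G.incidenceSet v).ncard

/-- A rainbow path: a path all of whose edges have pairwise distinct colors. -/
def IsRainbowPath {V : Type*} (G : SimpleGraph V) (c : Sym2 V → ℕ) {u v : V}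
    (p : G.Walk u v) : Prop :=
  p.IsPath ∧ (p.edges.map c).Nodup

/-- A rainbow cycle: a cycle all of whose edges have pairwise distinct colors. -/
def IsRainbowCycle {V : Type*} (G : SimpleGraph V) (c : Sym2 V → ℕ) {u : V}
    (p : G.Walk u u) : Prop :=
  p.IsCycle ∧ (p.edges.map c).Nodup

/-! ### Rainbow paths and cycles as sequences -/

/-- `f 0, f 1, …, f n` are the successive vertices of a rainbow path of length `n` in `G`. The
values of `f` beyond `n` are irrelevant. -/
structure RPath {V : Type*} (G : SimpleGraph V) (c : Sym2 V → ℕ) (n : ℕ) (f : ℕ → V) : Prop where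
  inj : ∀ a b, a ≤ n → b ≤ n → f a = f b → a = b
  adj : ∀ a, a < n → G.Adj (f a) (f (a + 1))
  col : ∀ a b, a < n → b < n → c s(f a, f (a + 1)) = c s(f b, f (b + 1)) → a = b

/-- The vertices `f 0, …, f n` of a rainbow path form a rainbow cycle of length `n + 1` once the
edge joining `f n` to `f 0` is added. -/
structure RClosed {V : Type*} (G : SimpleGraph V) (c : Sym2 V → ℕ) (n : ℕ) (f : ℕ → V) : Prop
    extends RPath G c n f where
  close : G.Adj (f n) (f 0)
  close_col : ∀ a, a < n → c s(f a, f (a + 1)) ≠ c s(f n, f 0)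

/-- A rainbow cycle of length `n ≥ 1`, its vertices indexed cyclically. The conditions cannot hold
for `n = 1` (no loops) or `n = 2` (the two edges coincide); `n = 0`, where `ZMod 0 = ℤ`, is not
used. -/
structure RCyc {V : Type*} (G : SimpleGraph V) (c : Sym2 V → ℕ) (n : ℕ) (z : ZMod n → V) :
    Prop where
  inj : Function.Injective z
  adj : ∀ a, G.Adj (z a) (z (a + 1))
  col : Function.Injective fun a => c s(z a, z (a + 1))

section
variable {V : Type*} {G : SimpleGraph V} {c : Sym2 V → ℕ}

theorem RPath.exists_walk (n : ℕ) : ∀ f : ℕ → V, RPath G c n f →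
    ∃ p : G.Walk (f 0) (f n), IsRainbowPath G c p ∧ p.length = n ∧
      (∀ v ∈ p.support, ∃ m ≤ n, v = f m) ∧ ∀ e ∈ p.edges, ∃ m < n, e = s(f m, f (m + 1)) := by
  induction n with
  | zero =>
    intro f _
    exact ⟨Walk.nil, by simp [IsRainbowPath], by simp, by simp, by simp⟩
  | succ n ih =>
    intro f hf
    obtain ⟨p, ⟨hp, hc⟩, hl, hs, he⟩ := ih (fun m => f (m + 1))
      ⟨fun a b ha hb h => by simpa using hf.inj _ _ (by omega) (by omega) h,
       fun a ha => hf.adj _ (by omega),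
       fun a b ha hb h => by simpa using hf.col _ _ (by omega) (by omega) h⟩
    refine ⟨Walk.cons (hf.adj 0 (by omega)) p, ⟨?_, ?_⟩, by simp [hl], ?_, ?_⟩
    · rw [Walk.cons_isPath_iff]
      refine ⟨hp, fun h => ?_⟩
      obtain ⟨m, hm, h⟩ := hs _ h
      have := hf.inj _ _ (by omega) (by omega) h
      omega
    · rw [Walk.edges_cons, List.map_cons, List.nodup_cons]
      refine ⟨fun h => ?_, hc⟩
      obtain ⟨e, h1, h2⟩ := List.mem_map.1 h
      obtain ⟨m, hm, rfl⟩ := he _ h1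
      have := hf.col (m + 1) 0 (by omega) (by omega) h2
      omega
    · intro v hv
      rw [Walk.support_cons, List.mem_cons] at hv
      rcases hv with rfl | hv
      · exact ⟨0, by omega, rfl⟩
      · obtain ⟨m, hm, h⟩ := hs _ hv
        exact ⟨m + 1, by omega, h⟩
    · intro e hv
      rw [Walk.edges_cons, List.mem_cons] at hv
      rcases hv with rfl | hv
      · exact ⟨0, by omega, rfl⟩
      · obtain ⟨m, hm, h⟩ := he _ hv
        exact ⟨m + 1, by omega, h⟩

theorem RClosed.exists_cycle {n : ℕ} {f : ℕ → V} (h : RClosed G c n f) :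
    ∃ (u : V) (q : G.Walk u u), IsRainbowCycle G c q ∧ q.length = n + 1 := by
  obtain ⟨p, ⟨hp, hc⟩, hl, -, he⟩ := h.toRPath.exists_walk
  have key : c s(f n, f 0) ∉ p.edges.map c := by
    intro hm
    obtain ⟨e, h1, h2⟩ := List.mem_map.1 hm
    obtain ⟨m, hm, rfl⟩ := he _ h1
    exact h.close_col m hm h2
  refine ⟨f n, Walk.cons h.close p, ⟨?_, ?_⟩, by simp [hl]⟩
  · rw [Walk.cons_isCycle_iff]
    exact ⟨hp, fun hm => key (List.mem_map_of_mem hm)⟩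
  · rw [Walk.edges_cons, List.map_cons, List.nodup_cons]
    exact ⟨key, hc⟩

theorem rpath_of_walk {u v : V} (p : G.Walk u v) (hp : IsRainbowPath G c p) :
    RPath G c p.length p.getVert := by
  refine ⟨fun a b ha hb h => hp.1.getVert_injOn ha hb h, fun a ha => p.adj_getVert_succ ha, ?_⟩
  intro a b ha hb h
  have := (List.nodup_iff_injective_get.1 hp.2)
    (a₁ := ⟨a, by simpa using ha⟩) (a₂ := ⟨b, by simpa using hb⟩)
    (by simpa [Walk.getElem_edges] using h)
  simpa using this

/-- Prepending a vertex to a sequence. -/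
def consSeq (w : V) (f : ℕ → V) : ℕ → V
  | 0 => w
  | m + 1 => f m

theorem RPath.cons {n : ℕ} {f : ℕ → V} (h : RPath G c n f) {w : V} (hw : G.Adj w (f 0))
    (hn : ∀ a ≤ n, f a ≠ w) (hc : ∀ a < n, c s(f a, f (a + 1)) ≠ c s(w, f 0)) :
    RPath G c (n + 1) (consSeq w f) := by
  refine ⟨?_, ?_, ?_⟩
  · rintro (_ | a) (_ | b) ha hb hab
    · rfl
    · exact absurd hab.symm (hn b (by omega))
    · exact absurd hab (hn a (by omega))
    · rw [h.inj a b (by omega) (by omega) hab]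
  · rintro (_ | a) ha
    · exact hw
    · exact h.adj a (by omega)
  · rintro (_ | a) (_ | b) ha hb hab
    · rfl
    · exact absurd hab.symm (hc b (by omega))
    · exact absurd hab (hc a (by omega))
    · rw [h.col a b (by omega) (by omega) hab]

theorem RPath.reverse {n : ℕ} {f : ℕ → V} (h : RPath G c n f) :
    RPath G c n (fun m => f (n - m)) := by
  have key : ∀ a, a < n → s(f (n - a), f (n - (a + 1))) = s(f (n - (a + 1)), f (n - (a + 1) + 1)) :=
    fun a ha => by rw [Sym2.eq_swap, show n - (a + 1) + 1 = n - a by omega]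
  refine ⟨?_, ?_, ?_⟩
  · intro a b ha hb hab
    have := h.inj _ _ (by omega) (by omega) hab
    omega
  · intro a ha
    have := h.adj (n - (a + 1)) (by omega)
    rw [show n - (a + 1) + 1 = n - a by omega] at this
    exact this.symm
  · intro a b ha hb hab
    simp only [key a ha, key b hb] at hab
    have := h.col _ _ (by omega) (by omega) hab
    omega

/-- A rainbow cycle may be cut open at any of its vertices. -/
theorem RCyc.rotate {n : ℕ} {z : ZMod (n + 1) → V} (h : RCyc G c (n + 1) z) (j : ZMod (n + 1)) :
    RPath G c n (fun m => z (j + m)) := by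
  have key : ∀ a b : ℕ, a ≤ n → b ≤ n → j + (a : ZMod (n + 1)) = j + b → a = b := by
    intro a b ha hb hab
    have := congrArg ZMod.val (add_left_cancel hab)
    rwa [ZMod.val_natCast_of_lt (by omega), ZMod.val_natCast_of_lt (by omega)] at this
  refine ⟨fun a b ha hb hab => key a b ha hb (h.inj hab), fun a _ => ?_, fun a b ha hb hab => ?_⟩
  · have := h.adj (j + a)
    rwa [add_assoc, ← Nat.cast_succ] at this
  · refine key a b (by omega) (by omega) (h.col ?_)
    simpa [add_assoc] using hab

theorem RClosed.rcyc {n : ℕ} {f : ℕ → V} (h : RClosed G c n f) :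
    RCyc G c (n + 1) (fun a => f a.val) := by
  have key : ∀ a : ZMod (n + 1), (a + 1).val = if a.val = n then 0 else a.val + 1 := by
    intro a
    have h1 := ZMod.val_lt a
    have h2 := ZMod.val_add a 1
    rw [ZMod.val_one_eq_one_mod, Nat.add_mod_mod] at h2
    rw [h2]
    split_ifs with h3
    · rw [h3, Nat.mod_self]
    · exact Nat.mod_eq_of_lt (by omega)
  refine ⟨?_, ?_, ?_⟩
  · intro a b hab
    have ha := ZMod.val_lt a
    have hb := ZMod.val_lt b
    exact ZMod.val_injective _ (h.inj _ _ (by omega) (by omega) hab)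
  · intro a
    have ha := ZMod.val_lt a
    simp only [key a]
    split_ifs with h3
    · rw [h3]; exact h.close
    · exact h.adj _ (by omega)
  · intro a b hab
    have ha := ZMod.val_lt a
    have hb := ZMod.val_lt b
    apply ZMod.val_injective
    simp only [key a, key b] at hab
    split_ifs at hab with h1 h2 h2
    · omega
    · rw [h1] at hab
      exact absurd hab.symm (h.close_col _ (by omega))
    · rw [h2] at hab
      exact absurd hab (h.close_col _ (by omega))
    · exact h.col _ _ (by omega) (by omega) hab

/-- If `k ≤ d^c(x)` and every neighbor of `x` along an edge with color outside `F` is some `z i`,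
then at least `k - |F|` of the edges from `x` to the `z i` have pairwise distinct colors
outside `F`. -/
theorem exists_fan {ι : Type*} {k : ℕ} {x : V} (hk : k ≤ colorDegree G c x) (F : Finset ℕ)
    (z : ι → V) (hz : ∀ w, G.Adj x w → c s(x, w) ∉ F → ∃ i, z i = w) :
    ∃ X : Finset ι, k ≤ X.card + F.card ∧ (∀ i ∈ X, G.Adj x (z i) ∧ c s(x, z i) ∉ F) ∧
      ∀ i ∈ X, ∀ j ∈ X, c s(x, z i) = c s(x, z j) → i = j := by
  classical
  by_cases hfin : (c '' G.incidenceSet x).Finite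
  swap
  · rw [colorDegree, Set.Infinite.ncard hfin] at hk
    exact ⟨∅, by omega, by simp, by simp⟩
  set S := hfin.toFinset \ F with hS
  have hcard : k ≤ S.card + F.card := by
    rw [colorDegree, Set.ncard_eq_toFinset_card _ hfin] at hk
    have := Finset.le_card_sdiff F hfin.toFinset
    rw [hS]
    omega
  have hex : ∀ a : S, ∃ i, G.Adj x (z i) ∧ c s(x, z i) = a := by
    rintro ⟨a, ha⟩
    rw [hS, Finset.mem_sdiff, Set.Finite.mem_toFinset] at ha
    obtain ⟨⟨e, ⟨he, hxe⟩, rfl⟩, hF⟩ := ha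
    obtain ⟨w, rfl⟩ := Sym2.mem_iff_exists.1 hxe
    obtain ⟨i, rfl⟩ := hz w he hF
    exact ⟨i, he, rfl⟩
  choose g hg hgc using hex
  have hginj : Function.Injective g := fun a b hab => by
    apply Subtype.ext
    rw [← hgc a, ← hgc b, hab]
  refine ⟨Finset.univ.image g, ?_, ?_, ?_⟩
  · rw [Finset.card_image_of_injective _ hginj]
    simpa using hcard
  · intro i hi
    obtain ⟨a, -, rfl⟩ := Finset.mem_image.1 hi
    refine ⟨hg a, ?_⟩
    rw [hgc a]
    exact (Finset.mem_sdiff.1 a.2).2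
  · intro i hi j hj hij
    obtain ⟨a, -, rfl⟩ := Finset.mem_image.1 hi
    obtain ⟨b, -, rfl⟩ := Finset.mem_image.1 hj
    rw [hgc, hgc] at hij
    rw [Subtype.ext hij]

/-! ### Paths and cycles built from a given one -/

/-- `f` is a rainbow path of length `n` with all vertices in `S` and all edge colors in `C`. -/
structure RPathIn (G : SimpleGraph V) (c : Sym2 V → ℕ) (n : ℕ) (f : ℕ → V) (S : Set V)
    (C : Set ℕ) : Prop extends RPath G c n f where
  mem : ∀ a, a ≤ n → f a ∈ S
  col_mem : ∀ a, a < n → c s(f a, f (a + 1)) ∈ C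

theorem RPathIn.cons {n : ℕ} {f : ℕ → V} {S : Set V} {C : Set ℕ} (h : RPathIn G c n f S C)
    {w : V} (hw : G.Adj w (f 0)) (hn : w ∉ S) (hc : c s(w, f 0) ∉ C) :
    RPathIn G c (n + 1) (consSeq w f) (insert w S) (insert (c s(w, f 0)) C) := by
  refine ⟨h.toRPath.cons hw (fun a ha e => hn (e ▸ h.mem a ha))
    (fun a ha e => hc (e ▸ h.col_mem a ha)), ?_, ?_⟩
  · rintro (_ | a) ha
    · exact Or.inl rfl
    · exact Or.inr (h.mem a (by omega))
  · rintro (_ | a) ha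
    · exact Or.inl rfl
    · exact Or.inr (h.col_mem a (by omega))

theorem RPathIn.closed {n : ℕ} {f : ℕ → V} {S : Set V} {C : Set ℕ} (h : RPathIn G c n f S C)
    (ha : G.Adj (f n) (f 0)) (hc : c s(f n, f 0) ∉ C) : RClosed G c n f :=
  ⟨h.toRPath, ha, fun a ha e => hc (e ▸ h.col_mem a ha)⟩

/-- The set of edge colors of a cyclically indexed cycle. -/
def cycColors (c : Sym2 V → ℕ) {n : ℕ} (z : ZMod n → V) : Set ℕ :=
  Set.range fun a => c s(z a, z (a + 1))

theorem RCyc.exists_rotate {n : ℕ} {z : ZMod (n + 1) → V} (h : RCyc G c (n + 1) z)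
    (j : ZMod (n + 1)) :
    ∃ g, g 0 = z j ∧ g n = z (j - 1) ∧ RPathIn G c n g (Set.range z) (cycColors c z) := by
  refine ⟨fun m => z (j + m), by simp, ?_, h.rotate j, fun a _ => ⟨_, rfl⟩, fun a _ => ?_⟩
  · have : ((n : ℕ) : ZMod (n + 1)) = -1 := by
      have := ZMod.natCast_self (n + 1)
      push_cast at this
      exact eq_neg_of_add_eq_zero_left this
    simp only [this, sub_eq_add_neg]
  · exact ⟨j + a, by simp [add_assoc]⟩

/-- Two chords `f 0 – f j` and `f t – f (i - 1)` with `i ≤ j`, of distinct colors not used on the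
rainbow path `f`, give the rainbow cycle `f 0, …, f (i - 1), f t, f (t - 1), …, f j`, which misses
exactly the vertices `f i, …, f (j - 1)` and the colors of the path edges between `f (i - 1)` and
`f j`. -/
theorem RPath.cross {t : ℕ} {f : ℕ → V} (h : RPath G c t f) {i j : ℕ} (hi : 1 ≤ i) (hij : i ≤ j)
    (hj : j ≤ t) (ha : G.Adj (f 0) (f j)) (hac : ∀ a < t, c s(f a, f (a + 1)) ≠ c s(f 0, f j))
    (hb : G.Adj (f t) (f (i - 1))) (hbc : ∀ a < t, c s(f a, f (a + 1)) ≠ c s(f t, f (i - 1)))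
    (hne : c s(f 0, f j) ≠ c s(f t, f (i - 1))) :
    ∃ g, RClosed G c (i + t - j) g ∧ g (i - 1) = f (i - 1) ∧ g (i + t - j) = f j ∧
      (∀ m, i ≤ m → m < j → ∀ a ≤ i + t - j, g a ≠ f m) ∧
      (∀ m, i ≤ m + 1 → m < j → (∀ a < i + t - j, c s(g a, g (a + 1)) ≠ c s(f m, f (m + 1))) ∧
        c s(g (i + t - j), g 0) ≠ c s(f m, f (m + 1))) := by
  set g : ℕ → V := fun m => f (if m < i then m else t - (m - i)) with hg
  have g1 : ∀ m, m < i → g m = f m := fun m hm => by simp [hg, hm]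
  have g2 : ∀ m, i ≤ m → g m = f (t - (m - i)) := fun m hm => by simp [hg, Nat.not_lt.2 hm]
  have gn : g (i + t - j) = f j := by
    rw [g2 _ (by omega)]; congr 1; omega
  have g0 : g 0 = f 0 := g1 0 (by omega)
  have hedge : ∀ m, m < i + t - j → (m + 1 < i ∧ s(g m, g (m + 1)) = s(f m, f (m + 1))) ∨
      (m + 1 = i ∧ s(g m, g (m + 1)) = s(f t, f (i - 1))) ∨
      (i ≤ m ∧ s(g m, g (m + 1)) =
        s(f (t - 1 - (m - i)), f (t - 1 - (m - i) + 1))) := by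
    intro m hm
    rcases lt_trichotomy (m + 1) i with h1 | h1 | h1
    · left; exact ⟨h1, by rw [g1 _ h1, g1 _ (by omega)]⟩
    · right; left
      refine ⟨h1, ?_⟩
      rw [g1 m (by omega), g2 (m + 1) (by omega), Sym2.eq_swap]
      congr 3 <;> omega
    · right; right
      refine ⟨by omega, ?_⟩
      rw [g2 m (by omega), g2 (m + 1) (by omega), Sym2.eq_swap,
        show t - (m + 1 - i) = t - 1 - (m - i) by omega,
        show t - (m - i) = t - 1 - (m - i) + 1 by omega]
  refine ⟨g, ⟨⟨?_, ?_, ?_⟩, ?_, ?_⟩, g1 _ (by omega), gn, ?_, ?_⟩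
  · intro a b ha hb hab
    have := h.inj _ _ (by split_ifs <;> omega) (by split_ifs <;> omega) hab
    split_ifs at this <;> omega
  · intro m hm
    rw [← SimpleGraph.mem_edgeSet]
    rcases hedge m hm with ⟨h1, h2⟩ | ⟨h1, h2⟩ | ⟨h1, h2⟩ <;> rw [h2, SimpleGraph.mem_edgeSet]
    · exact h.adj _ (by omega)
    · exact hb
    · exact h.adj _ (by omega)
  · intro a b ha hb hab
    rcases hedge a ha with ⟨h1, h2⟩ | ⟨h1, h2⟩ | ⟨h1, h2⟩ <;>
    rcases hedge b hb with ⟨h3, h4⟩ | ⟨h3, h4⟩ | ⟨h3, h4⟩ <;> rw [h2, h4] at hab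
    · exact h.col _ _ (by omega) (by omega) hab
    · exact absurd hab (hbc _ (by omega))
    · have := h.col _ _ (by omega) (by omega) hab
      omega
    · exact absurd hab.symm (hbc _ (by omega))
    · omega
    · exact absurd hab.symm (hbc _ (by omega))
    · have := h.col _ _ (by omega) (by omega) hab
      omega
    · exact absurd hab (hbc _ (by omega))
    · have := h.col _ _ (by omega) (by omega) hab
      omega
  · rw [gn, g0]; exact ha.symm
  · intro m hm
    rw [gn, g0, Sym2.eq_swap (a := f j)]
    rcases hedge m hm with ⟨h1, h2⟩ | ⟨h1, h2⟩ | ⟨h1, h2⟩ <;> rw [h2]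
    · exact hac _ (by omega)
    · exact hne.symm
    · exact hac _ (by omega)
  · intro m hm hmj a ha hab
    have := h.inj _ _ (by split_ifs <;> omega) (by omega) hab
    split_ifs at this <;> omega
  · intro m hm hmj
    constructor
    · intro a ha hab
      rcases hedge a ha with ⟨h1, h2⟩ | ⟨h1, h2⟩ | ⟨h1, h2⟩ <;> rw [h2] at hab
      · have := h.col _ _ (by omega) (by omega) hab
        omega
      · exact hbc m (by omega) hab.symm
      · have := h.col _ _ (by omega) (by omega) hab
        omega
    · rw [gn, g0, Sym2.eq_swap (a := f j)]
      exact (hac m (by omega)).symm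

theorem RClosed.notMem_cycColors {n : ℕ} {g : ℕ → V} {γ : ℕ}
    (h1 : ∀ a < n, c s(g a, g (a + 1)) ≠ γ) (h2 : c s(g n, g 0) ≠ γ) :
    γ ∉ cycColors c (fun a : ZMod (n + 1) => g a.val) := by
  rintro ⟨a, ha⟩
  have hlt := ZMod.val_lt a
  have h3 := ZMod.val_add a 1
  rw [ZMod.val_one_eq_one_mod, Nat.add_mod_mod] at h3
  simp only [h3] at ha
  by_cases h4 : a.val = n
  · rw [h4, Nat.mod_self] at ha
    exact h2 ha
  · rw [Nat.mod_eq_of_lt (by omega)] at ha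
    exact h1 _ (by omega) ha

theorem exists_finset_cycColors {n : ℕ} (z : ZMod (n + 1) → V) :
    ∃ F : Finset ℕ, F.card ≤ n + 1 ∧ ∀ a, a ∈ F ↔ a ∈ cycColors c z := by
  refine ⟨Finset.univ.image fun a => c s(z a, z (a + 1)), ?_, fun a => by simp [cycColors]⟩
  exact Finset.card_image_le.trans (by simp [ZMod.card])

/-! ### Rainbow cycles of length `t` and `t - 1` with attached vertices -/

/-- Here the maximum length of a rainbow path is `t = n + 1`.
There is no rainbow cycle of length `t` together with an outside vertex `x` that sends to it
two edges of distinct colors not used on the cycle: all new colors at `x` would occur on edges to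
the cycle, and two of them would occur at consecutive vertices. -/
theorem no_gap_one {k n : ℕ} {z : ZMod (n + 1) → V} (hz : RCyc G c (n + 1) z) (hn : 1 ≤ n)
    (hmax : ∀ m f, RPath G c m f → m ≤ n + 1) (hno : ∀ f, ¬ RClosed G c (n + 1) f)
    (hk : 5 * (n + 1) < 3 * k) {x : V} (hdeg : k ≤ colorDegree G c x) (hx : x ∉ Set.range z)
    {a b : ZMod (n + 1)} (ha : G.Adj x (z a)) (hac : c s(x, z a) ∉ cycColors c z)
    (hb : G.Adj x (z b)) (hbc : c s(x, z b) ∉ cycColors c z)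
    (hab : c s(x, z a) ≠ c s(x, z b)) : False := by
  classical
  obtain ⟨F, hF, hFm⟩ := exists_finset_cycColors (c := c) z
  obtain ⟨X, hX, hXm, hXi⟩ := exists_fan hdeg F z (by
    intro w hw hwc
    by_contra hcon
    have hwz : w ∉ Set.range z := hcon
    rw [hFm] at hwc
    obtain ⟨e, he, hec, hne⟩ : ∃ e, G.Adj x (z e) ∧ c s(x, z e) ∉ cycColors c z ∧
        c s(x, w) ≠ c s(x, z e) := by
      by_cases h : c s(x, w) = c s(x, z a)
      · exact ⟨b, hb, hbc, h ▸ hab⟩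
      · exact ⟨a, ha, hac, h⟩
    obtain ⟨g, g0, -, hg⟩ := hz.exists_rotate e
    rw [← g0] at he hec hne
    have h1 := hg.cons he hx hec
    have h2 := h1.cons (w := w) hw.symm
      (by simpa [hw.ne'] using hwz)
      (by rw [Sym2.eq_swap (a := w)]; simpa [consSeq, hne] using hwc)
    have := hmax _ _ h2.toRPath
    omega)
  -- more than half of the cycle is in `X`, so `X` meets its own shift
  obtain ⟨j, hj⟩ : (X ∩ X.image (· - 1)).Nonempty := by
    rw [← Finset.card_pos]
    have h1 := Finset.card_union_add_card_inter X (X.image (· - 1))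
    rw [Finset.card_image_of_injective _ (sub_left_injective)] at h1
    have h2 := Finset.card_le_univ (X ∪ X.image (· - 1))
    rw [ZMod.card] at h2
    omega
  rw [Finset.mem_inter, Finset.mem_image] at hj
  obtain ⟨hj, j', hj', rfl⟩ := hj
  obtain ⟨g, g0, gn, hg⟩ := hz.exists_rotate j'
  have e1 := hXm _ hj
  have e2 := hXm _ hj'
  rw [hFm, ← gn] at e1
  rw [hFm, ← g0] at e2
  have h1 := hg.cons e2.1 hx e2.2
  refine hno _ (h1.closed e1.1.symm ?_)
  change c s(g n, x) ∉ _
  rw [Sym2.eq_swap (a := g n), Set.mem_insert_iff, not_or]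
  refine ⟨fun h => ?_, e1.2⟩
  rw [g0, gn] at h
  have h3 := hXi _ hj _ hj' h
  have : Fact (1 < n + 1) := ⟨by omega⟩
  exact one_ne_zero (sub_eq_self.1 h3)

/-- Here the maximum length of a rainbow path is `t = n + 2`.
Let `x y` be an edge of new color disjoint from a rainbow cycle of length `t - 1`. If for each color
`γ ∉ F'` the vertex `y` sends to the cycle an edge of new color different from `γ` and from the
color of `x y`, then all new colors at `x` apart from that of `x y`
and those in `F'` occur on edges to the cycle, since otherwise a path entering the cycle through
`x y` would be too long. -/
theorem fan_gap_two {k n : ℕ} {z : ZMod (n + 1) → V} (hz : RCyc G c (n + 1) z)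
    (hmax : ∀ m f, RPath G c m f → m ≤ n + 2)
    {x y : V} (hdeg : k ≤ colorDegree G c x) (hx : x ∉ Set.range z) (hy : y ∉ Set.range z)
    (hxy : G.Adj x y) (hd : c s(x, y) ∉ cycColors c z) (F' : Finset ℕ)
    (hF' : ∀ γ, γ ∉ F' → ∃ b, G.Adj y (z b) ∧ c s(y, z b) ∉ cycColors c z ∧
      c s(y, z b) ≠ c s(x, y) ∧ c s(y, z b) ≠ γ) :
    ∃ X : Finset (ZMod (n + 1)), k ≤ X.card + (n + 2 + F'.card) ∧
      (∀ i ∈ X, G.Adj x (z i) ∧ c s(x, z i) ∉ cycColors c z ∧ c s(x, z i) ≠ c s(x, y)) ∧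
      ∀ i ∈ X, ∀ j ∈ X, c s(x, z i) = c s(x, z j) → i = j := by
  classical
  obtain ⟨F, hF, hFm⟩ := exists_finset_cycColors (c := c) z
  obtain ⟨X, hX, hXm, hXi⟩ := exists_fan hdeg (insert (c s(x, y)) (F ∪ F')) z (by
    intro w hw hwc
    by_contra hcon
    have hwz : w ∉ Set.range z := hcon
    simp only [Finset.mem_insert, Finset.mem_union, not_or, hFm] at hwc
    obtain ⟨hw1, hw2, hw3⟩ := hwc
    obtain ⟨b, hb, hbc, hbd, hbw⟩ := hF' _ hw3
    have hwy : w ≠ y := fun h => hw1 (by rw [h])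
    obtain ⟨g, g0, -, hg⟩ := hz.exists_rotate b
    rw [← g0] at hb hbc hbd hbw
    have h1 := hg.cons hb hy hbc
    have h2 := h1.cons (w := x) hxy (by simpa [hxy.ne] using hx)
      (by simpa [consSeq, hbd.symm] using hd)
    have h3 := h2.cons (w := w) hw.symm
      (by simpa [hw.ne', hwy] using hwz)
      (by rw [Sym2.eq_swap (a := w)]; simpa [consSeq, hw1, hbw.symm] using hw2)
    have := hmax _ _ h3.toRPath
    omega)
  refine ⟨X, ?_, ?_, hXi⟩
  · have h1 := Finset.card_insert_le (c s(x, y)) (F ∪ F')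
    have h2 := Finset.card_union_le F F'
    omega
  · intro i hi
    have := hXm i hi
    simp only [Finset.mem_insert, Finset.mem_union, not_or, hFm] at this
    exact ⟨this.1, this.2.2.1, this.2.1⟩

/-- Inserting `x y` between two consecutive vertices of a rainbow cycle. -/
theorem closed_gap_two {n : ℕ} {z : ZMod (n + 1) → V} (hz : RCyc G c (n + 1) z)
    {x y : V} (hx : x ∉ Set.range z) (hy : y ∉ Set.range z)
    (hxy : G.Adj x y) (hd : c s(x, y) ∉ cycColors c z) {j : ZMod (n + 1)}
    (ha : G.Adj x (z (j - 1))) (hac : c s(x, z (j - 1)) ∉ cycColors c z)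
    (had : c s(x, z (j - 1)) ≠ c s(x, y))
    (hb : G.Adj y (z j)) (hbc : c s(y, z j) ∉ cycColors c z) (hbd : c s(y, z j) ≠ c s(x, y))
    (hab : c s(x, z (j - 1)) ≠ c s(y, z j)) : ∃ f, RClosed G c (n + 2) f := by
  obtain ⟨g, g0, gn, hg⟩ := hz.exists_rotate j
  rw [← g0] at hb hbc hbd hab
  rw [← gn] at ha hac had hab
  have h1 := hg.cons hb hy hbc
  have h2 := h1.cons (w := x) hxy (by simpa [hxy.ne] using hx)
    (by simpa [consSeq, hbd.symm] using hd)
  refine ⟨_, h2.closed ha.symm ?_⟩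
  change c s(g n, x) ∉ _
  rw [Sym2.eq_swap (a := g n)]
  simpa [consSeq, had, hab] using hac

/-- Here the maximum length of a rainbow path is `t = n + 2`.
There is no rainbow cycle of length `t - 1` together with a disjoint edge `x y` of new color whose
ends both send to the cycle an edge of new color different from that of `x y`. Some vertex of the
fan of `x` would have both its cycle neighbors in the fan of `y`; inserting `x y` on either side
forces the two edges at `y` to have the same color as the edge at `x`. -/
theorem no_gap_two {k n : ℕ} {z : ZMod (n + 1) → V} (hz : RCyc G c (n + 1) z) (hn : 2 ≤ n)
    (hmax : ∀ m f, RPath G c m f → m ≤ n + 2) (hno : ∀ f, ¬ RClosed G c (n + 2) f)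
    (hk : 5 * (n + 2) < 3 * k) (hdeg : ∀ v, k ≤ colorDegree G c v) {x y : V}
    (hx : x ∉ Set.range z) (hy : y ∉ Set.range z)
    (hxy : G.Adj x y) (hd : c s(x, y) ∉ cycColors c z) {a b : ZMod (n + 1)}
    (ha : G.Adj x (z a)) (hac : c s(x, z a) ∉ cycColors c z) (had : c s(x, z a) ≠ c s(x, y))
    (hb : G.Adj y (z b)) (hbc : c s(y, z b) ∉ cycColors c z)
    (hbd : c s(y, z b) ≠ c s(x, y)) : False := by
  classical
  have hswap : c s(y, x) = c s(x, y) := by rw [Sym2.eq_swap]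
  have hd' : c s(y, x) ∉ cycColors c z := hswap ▸ hd
  -- a fan with at least two edges has one avoiding any given color
  have two : ∀ (w : V) (X : Finset (ZMod (n + 1))), 2 ≤ X.card →
      (∀ i ∈ X, ∀ j ∈ X, c s(w, z i) = c s(w, z j) → i = j) → ∀ γ, ∃ i ∈ X, c s(w, z i) ≠ γ := by
    intro w X hX hi γ
    obtain ⟨p, hp, q, hq, hpq⟩ := Finset.one_lt_card.1 hX
    by_contra! hcon
    exact hpq (hi p hp q hq ((hcon p hp).trans (hcon q hq).symm))
  obtain ⟨X₁, hX₁, hX₁m, hX₁i⟩ := fan_gap_two hz hmax (hdeg x) hx hy hxy hd {c s(y, z b)}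
    (fun γ hγ => ⟨b, hb, hbc, hbd, fun h => hγ (by simp [h])⟩)
  obtain ⟨Y₁, hY₁, hY₁m, hY₁i⟩ := fan_gap_two hz hmax (hdeg y) hy hx hxy.symm hd' {c s(x, z a)}
    (fun γ hγ => ⟨a, ha, hac, hswap ▸ had, fun h => hγ (by simp [h])⟩)
  rw [Finset.card_singleton] at hX₁ hY₁
  obtain ⟨X, hX, hXm, hXi⟩ := fan_gap_two hz hmax (hdeg x) hx hy hxy hd ∅ (by
    intro γ _
    obtain ⟨i, hi, hne⟩ := two y Y₁ (by omega) hY₁i γ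
    obtain ⟨h1, h2, h3⟩ := hY₁m i hi
    exact ⟨i, h1, h2, hswap ▸ h3, hne⟩)
  obtain ⟨Y, hY, hYm, hYi⟩ := fan_gap_two hz hmax (hdeg y) hy hx hxy.symm hd' ∅ (by
    intro γ _
    obtain ⟨i, hi, hne⟩ := two x X₁ (by omega) hX₁i γ
    obtain ⟨h1, h2, h3⟩ := hX₁m i hi
    exact ⟨i, h1, h2, hswap ▸ h3, hne⟩)
  rw [Finset.card_empty] at hX hY
  -- `X`, `Y - 1`, `Y + 1` each fill more than two thirds of the cycle
  obtain ⟨j, hj⟩ : (X ∩ (Y.image (· - 1) ∩ Y.image (· + 1))).Nonempty := by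
    rw [← Finset.card_pos]
    have h1 := Finset.card_union_add_card_inter X (Y.image (· - 1) ∩ Y.image (· + 1))
    have h2 := Finset.card_union_add_card_inter (Y.image (· - 1)) (Y.image (· + 1))
    rw [Finset.card_image_of_injective _ (sub_left_injective),
      Finset.card_image_of_injective _ (add_left_injective 1)] at h2
    have h3 := Finset.card_le_univ (X ∪ (Y.image (· - 1) ∩ Y.image (· + 1)))
    have h4 := Finset.card_le_univ (Y.image (· - 1) ∪ Y.image (· + 1))
    rw [ZMod.card] at h3 h4
    omega
  simp only [Finset.mem_inter, Finset.mem_image] at hj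
  obtain ⟨hj, ⟨p, hp, hpj⟩, ⟨q, hq, hqj⟩⟩ := hj
  have hxj := hXm j hj
  have hyp := hYm p hp
  have hyq := hYm q hq
  have e1 : c s(x, z j) = c s(y, z p) := by
    by_contra hne
    rw [← hpj] at hxj hne
    obtain ⟨f, hf⟩ := closed_gap_two hz hx hy hxy hd hxj.1 hxj.2.1 hxj.2.2 hyp.1 hyp.2.1
      (hswap ▸ hyp.2.2) hne
    exact hno f hf
  have e2 : c s(y, z q) = c s(x, z j) := by
    by_contra hne
    obtain rfl : q = j - 1 := eq_sub_of_add_eq hqj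
    obtain ⟨f, hf⟩ := closed_gap_two hz hy hx hxy.symm hd' hyq.1 hyq.2.1 hyq.2.2 hxj.1 hxj.2.1
      (hswap ▸ hxj.2.2) hne
    exact hno f hf
  have hpq : q = p := hYi q hq p hp (e2.trans e1)
  have h2 : ((2 : ℕ) : ZMod (n + 1)) = 0 := by
    have : q + 2 = q := by
      calc q + 2 = (q + 1) + 1 := by ring
        _ = (p - 1) + 1 := by rw [hqj, hpj]
        _ = q := by rw [hpq]; ring
    exact_mod_cast add_eq_left.1 this
  have := congrArg ZMod.val h2
  rw [ZMod.val_natCast_of_lt (by omega), ZMod.val_zero] at this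
  omega

/-! ### The end fans of a maximum rainbow path -/

/-- If there is no rainbow cycle of length `t + 1`, the start of a maximum rainbow path is joined to
at least `k - t` of the vertices `f 2, …, f (t - 1)` by edges of pairwise distinct colors not used
on the path. -/
theorem exists_end_fan {k t : ℕ} {f : ℕ → V} (hf : RPath G c t f)
    (hmax : ∀ m f, RPath G c m f → m ≤ t) (hno : ∀ f, ¬ RClosed G c t f)
    (hdeg : k ≤ colorDegree G c (f 0)) :
    ∃ A : Finset ℕ, k ≤ A.card + t ∧ (∀ i ∈ A, 2 ≤ i ∧ i + 1 ≤ t ∧ G.Adj (f 0) (f i) ∧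
        ∀ a < t, c s(f a, f (a + 1)) ≠ c s(f 0, f i)) ∧
      ∀ i ∈ A, ∀ j ∈ A, c s(f 0, f i) = c s(f 0, f j) → i = j := by
  classical
  set F := (Finset.range t).image fun a => c s(f a, f (a + 1)) with hF
  have hFc : F.card ≤ t := Finset.card_image_le.trans (by simp)
  have hFm : ∀ γ, γ ∉ F → ∀ a < t, c s(f a, f (a + 1)) ≠ γ := fun γ hγ a ha h =>
    hγ (Finset.mem_image.2 ⟨a, by simpa using ha, h⟩)
  obtain ⟨X, hX, hXm, hXi⟩ := exists_fan hdeg F (fun i : Fin (t + 1) => f i) (by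
    intro w hw hwc
    by_contra! hcon
    have := hmax _ _ (hf.cons hw.symm (fun a ha => hcon ⟨a, by omega⟩)
      (by rw [Sym2.eq_swap]; exact hFm _ hwc))
    omega)
  refine ⟨X.map Fin.valEmbedding, by rw [Finset.card_map]; omega, ?_, ?_⟩
  · intro i hi
    obtain ⟨i, hi', rfl⟩ := Finset.mem_map.1 hi
    obtain ⟨h1, h2⟩ := hXm i hi'
    have h3 := hFm _ h2
    rw [Fin.valEmbedding_apply]
    have hlt := i.2
    have i0 : (i : ℕ) ≠ 0 := fun h => h1.ne (by rw [h])
    have i1 : (i : ℕ) ≠ 1 := fun h => h3 0 (by omega) (by rw [h])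
    have it : (i : ℕ) ≠ t := fun h => by
      rw [h] at h1 h3
      exact hno f ⟨hf, h1.symm, by rw [Sym2.eq_swap]; exact h3⟩
    exact ⟨by omega, by omega, h1, h3⟩
  · intro i hi j hj hij
    obtain ⟨i, hi', rfl⟩ := Finset.mem_map.1 hi
    obtain ⟨j, hj', rfl⟩ := Finset.mem_map.1 hj
    exact congrArg _ (hXi i hi' j hj' hij)

/-- If the maximum length `t` of a rainbow path is less than `3k/5`, some rainbow path of length `t`
closes up to a rainbow cycle of length `t + 1`. -/
theorem exists_rclosed {k t : ℕ} {f : ℕ → V} (hf : RPath G c t f)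
    (hmax : ∀ m f, RPath G c m f → m ≤ t) (hdeg : ∀ v, k ≤ colorDegree G c v)
    (hk : 5 * t < 3 * k) : ∃ f, RClosed G c t f := by
  classical
  by_contra! hno
  obtain ⟨A, hA, hAm, hAi⟩ := exists_end_fan hf hmax hno (hdeg _)
  obtain ⟨B, hB, hBm, -⟩ := exists_end_fan hf.reverse hmax hno (hdeg _)
  have hBm' : ∀ i ∈ B.image (t + 1 - ·), 2 ≤ i ∧ i + 1 ≤ t ∧ G.Adj (f t) (f (i - 1)) ∧
      ∀ a < t, c s(f a, f (a + 1)) ≠ c s(f t, f (i - 1)) := by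
    intro i hi
    obtain ⟨b, hb, rfl⟩ := Finset.mem_image.1 hi
    obtain ⟨h1, h2, h3, h4⟩ := hBm b hb
    have e : t + 1 - b - 1 = t - b := by omega
    rw [Nat.sub_zero] at h3 h4
    refine ⟨by omega, by omega, e ▸ h3, fun a ha => ?_⟩
    have := h4 (t - 1 - a) (by omega)
    rw [Sym2.eq_swap, show t - (t - 1 - a + 1) = a by omega,
      show t - (t - 1 - a) = a + 1 by omega] at this
    exact e ▸ this
  have hBc : (B.image (t + 1 - ·)).card = B.card := by
    refine Finset.card_image_of_injOn fun a ha b hb hab => ?_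
    have h1 := hBm a ha
    have h2 := hBm b hb
    omega
  -- indices where the two end fans cross; there the two chords have the same color
  set I := A ∩ B.image (t + 1 - ·) with hI
  have hIc : t + 8 ≤ 3 * I.card := by
    have h1 := Finset.card_union_add_card_inter A (B.image (t + 1 - ·))
    have h2 : A ∪ B.image (t + 1 - ·) ⊆ Finset.Ico 2 t := by
      intro i hi
      rw [Finset.mem_Ico]
      rcases Finset.mem_union.1 hi with hi | hi
      · have := hAm i hi
        omega
      · have := hBm' i hi
        omega
    have h3 := Finset.card_le_card h2
    rw [Nat.card_Ico] at h3
    rw [← hI] at h1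
    have h4 := Finset.card_le_card (Finset.subset_union_left : A ⊆ A ∪ B.image (t + 1 - ·))
    omega
  have hsame : ∀ i ∈ I, c s(f 0, f i) = c s(f t, f (i - 1)) := by
    intro i hi
    rw [hI, Finset.mem_inter] at hi
    obtain ⟨a1, a2, a3, a4⟩ := hAm i hi.1
    obtain ⟨-, -, b3, b4⟩ := hBm' i hi.2
    by_contra hne
    obtain ⟨g, hg, -⟩ := hf.cross (by omega) le_rfl (by omega) a3 a4 b3 b4 hne
    rw [show i + t - i = t by omega] at hg
    exact hno g hg
  -- two elements of `I` at distance at most two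
  obtain ⟨i, hi, j, hj, hij, hji⟩ : ∃ i ∈ I, ∃ j ∈ I, i < j ∧ j ≤ i + 2 := by
    obtain ⟨p, hp, q, hq, hpq, h⟩ := Finset.exists_ne_map_eq_of_card_lt_of_maps_to
      (s := I) (t := Finset.range ((t - 1) / 3 + 1)) (f := (· / 3))
      (by rw [Finset.card_range]; omega) (by
        intro i hi
        rw [Finset.mem_coe, hI, Finset.mem_inter] at hi
        have := hAm i hi.1
        simp only [Finset.coe_range, Set.mem_Iio]
        omega)
    rcases lt_or_gt_of_ne hpq with h1 | h1
    · exact ⟨p, hp, q, hq, h1, by omega⟩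
    · exact ⟨q, hq, p, hp, h1, by omega⟩
  have hiI := hsame i hi
  rw [hI, Finset.mem_inter] at hi hj
  obtain ⟨i2, -, -, -⟩ := hAm i hi.1
  obtain ⟨-, -, b3, b4⟩ := hBm' i hi.2
  obtain ⟨j2, jt, a3, a4⟩ := hAm j hj.1
  obtain ⟨g, hg, gi, gn, gv, gc⟩ := hf.cross (i := i) (j := j) (by omega) (by omega) (by omega)
    a3 a4 b3 b4 (by
      rw [← hiI]
      intro h
      have := hAi _ hj.1 _ hi.1 h
      omega)
  have hz := hg.rcyc
  set n := i + t - j with hn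
  set z : ZMod (n + 1) → V := fun a => g a.val with hzdef
  have hzv : ∀ m, i ≤ m → m < j → f m ∉ Set.range z := by
    rintro m h1 h2 ⟨a, ha⟩
    have := ZMod.val_lt a
    exact gv m h1 h2 _ (by omega) ha
  have hzc : ∀ m, i ≤ m + 1 → m < j → c s(f m, f (m + 1)) ∉ cycColors c z := fun m h1 h2 =>
    RClosed.notMem_cycColors (gc m h1 h2).1 (gc m h1 h2).2
  have hzi : z ((i - 1 : ℕ) : ZMod (n + 1)) = f (i - 1) := by
    rw [hzdef]
    simp only
    rw [ZMod.val_natCast_of_lt (by omega), gi]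
  have hzj : z ((n : ℕ) : ZMod (n + 1)) = f j := by
    rw [hzdef]
    simp only
    rw [ZMod.val_natCast_of_lt (by omega), gn]
  have hleft : s(f i, f (i - 1)) = s(f (i - 1), f (i - 1 + 1)) := by
    rw [Sym2.eq_swap, Nat.sub_add_cancel (by omega)]
  have hadj : G.Adj (f i) (f (i - 1)) := by
    have := hf.adj (i - 1) (by omega)
    rw [Nat.sub_add_cancel (by omega)] at this
    exact this.symm
  obtain h1 | h1 : j = i + 1 ∨ j = i + 2 := by omega
  · subst h1
    have hnt : n + 1 = t := by omega
    refine no_gap_one (k := k) (x := f i) (a := ((i - 1 : ℕ) : ZMod (n + 1)))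
      (b := ((n : ℕ) : ZMod (n + 1))) hz (by omega) (hnt ▸ hmax) (hnt ▸ hno) (by omega) (hdeg _)
      (hzv i le_rfl (by omega)) ?_ ?_ ?_ ?_ ?_
    · rw [hzi]; exact hadj
    · rw [hzi, hleft]; exact hzc _ (by omega) (by omega)
    · rw [hzj]; exact hf.adj i (by omega)
    · rw [hzj]; exact hzc _ (by omega) (by omega)
    · rw [hzi, hzj, hleft]
      intro h
      have := hf.col _ _ (by omega) (by omega) h
      omega
  · subst h1
    have hnt : n + 2 = t := by omega
    have hright : s(f (i + 1), f (i + 2)) = s(f (i + 1), f (i + 1 + 1)) := rfl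
    refine no_gap_two (k := k) (x := f i) (y := f (i + 1)) (a := ((i - 1 : ℕ) : ZMod (n + 1)))
      (b := ((n : ℕ) : ZMod (n + 1))) hz (by omega) (hnt ▸ hmax) (hnt ▸ hno) (by omega) hdeg
      (hzv i le_rfl (by omega)) (hzv (i + 1) (by omega) (by omega)) (hf.adj i (by omega))
      (hzc i (by omega) (by omega)) ?_ ?_ ?_ ?_ ?_ ?_
    · rw [hzi]; exact hadj
    · rw [hzi, hleft]; exact hzc _ (by omega) (by omega)
    · rw [hzi, hleft]
      intro h
      have := hf.col _ _ (by omega) (by omega) h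
      omega
    · rw [hzj]; exact hf.adj (i + 1) (by omega)
    · rw [hzj, hright]; exact hzc _ (by omega) (by omega)
    · rw [hzj, hright]
      intro h
      have := hf.col _ _ (by omega) (by omega) h
      omega

end

theorem rainbow_cycle_of_short_max_rainbow_path {V : Type*} [Fintype V]
    (G : SimpleGraph V) (c : Sym2 V → ℕ) (k t : ℕ)
    (hdeg : ∀ v : V, k ≤ colorDegree G c v)
    (hex : ∃ (u v : V) (p : G.Walk u v), IsRainbowPath G c p ∧ p.length = t)
    (hmax : ∀ (u v : V) (p : G.Walk u v), IsRainbowPath G c p → p.length ≤ t)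
    (ht : t < ⌈(3 * (k : ℚ)) / 5⌉₊) :
    ∃ (u : V) (q : G.Walk u u), IsRainbowCycle G c q ∧ q.length = t + 1 := by
  obtain ⟨u, v, p, hp, rfl⟩ := hex
  have hk : 5 * p.length < 3 * k := by
    rw [Nat.lt_ceil, lt_div_iff₀ (by norm_num)] at ht
    have : p.length * 5 < 3 * k := by exact_mod_cast ht
    omega
  obtain ⟨f, hf⟩ := exists_rclosed (rpath_of_walk p hp) (fun m f hf => by
    obtain ⟨q, hq, hl, -⟩ := hf.exists_walk
    exact hl ▸ hmax _ _ q hq) hdeg hk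
  exact hf.exists_cycle
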